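/- Let X be a compact metric space, let 𝔓₁ be the Markov operator of a Feller Markov transition function on X (𝔓₁𝟏 = 𝟏, 𝔓₁ maps C(X) into C(X) and preserves non-negativity), and define J(σ) = −inf_{g ∈ C₊(X)} ⟨log(𝔓₁g/g), σ⟩ for σ ∈ 𝒫(X). Let V ∈ C(X), λ > 0 and h ∈ C₊(X) satisfy 𝔓₁(h e^V) = λh, set h̃ = h e^V (so that e^V 𝔓₁h̃ = λh̃), and suppose ν = hμ is the unique stationary measure of the Markov semigroup 𝒮₁^V g = λ^{-1} h^{-1} 𝔓₁(g h e^V) on C(X). Then for σ ∈ 𝒫(X) the infimum defining J(σ) is attained at the function g = h̃, i.e. J(σ) = −⟨log(𝔓₁h̃/h̃), σ⟩, if and only if σ = ν. -/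

import Mathlib

open MeasureTheory Filter Topology
open scoped ENNReal NNReal

noncomputable section

variable {X : Type} [MetricSpace X] [CompactSpace X] [MeasurableSpace X] [BorelSpace X]

/-- The Markov operator `𝔓₁ f (u) = ∫ f dP(u,·)` of a Markov transition function. -/
def opP1 (P : X → ProbabilityMeasure X) (f : X → ℝ) (u : X) : ℝ :=
  ∫ v, f v ∂(P u : Measure X)

/-- The functional `J(σ) = -inf_{g ∈ C₊(X)} ⟨log (𝔓₁ g / g), σ⟩` (Donsker–Varadhan form of
the rate function, Lemma 4.1). -/
def DVfunctional (P : X → ProbabilityMeasure X) (σ : ProbabilityMeasure X) : EReal :=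
  -(⨅ g : {g : X → ℝ // Continuous g ∧ ∀ x, 0 < g x},
      ((∫ x, Real.log (opP1 P g.1 x / g.1 x) ∂(σ : Measure X) : ℝ) : EReal))

/-!
Tilting the transition function `P` by a positive continuous `g`, that is passing to its Doob
transform `Q f = 𝔓₁(f g) / 𝔓₁ g`, splits the functional under the infimum:
`⟨log (𝔓₁(f g) / (f g)), σ⟩ = ⟨log (𝔓₁ g / g), σ⟩ + ⟨log (Q f / f), σ⟩`.
So `g` is a minimizer for `P` if and only if `⟨log (Q f / f), σ⟩ ≥ 0` for all positive continuous
`f`. If `σ` is stationary for `Q`, this holds by Jensen's inequality `Q (log f) ≤ log (Q f)`.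
Conversely, for `f = exp (t φ)` this quantity is at most `t ⟨Q φ - φ, σ⟩ + O(t²)`, and for this to
be nonnegative for small `t` of both signs, the linear term must vanish.
For `g = h e^V` the eigenvalue equation identifies `Q` with `𝒮₁^V`.
-/

lemma integrable_of_continuous {E : Type*} [TopologicalSpace E] [CompactSpace E]
    [MeasurableSpace E] [OpensMeasurableSpace E] (m : Measure E) [IsFiniteMeasureOnCompacts m]
    {f : E → ℝ} (hf : Continuous f) : Integrable f m :=
  hf.integrable_of_hasCompactSupport (HasCompactSupport.of_compactSpace f)

lemma eq_zero_of_eventually_nonneg_linear_add_sq {a b : ℝ}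
    (hnonneg : ∀ᶠ t in 𝓝 (0 : ℝ), 0 ≤ t * a + t ^ 2 * b) : a = 0 := by
  have hmin : IsLocalMin (fun t : ℝ ↦ t * a + t ^ 2 * b) 0 := by
    simpa [IsLocalMin, IsMinFilter] using hnonneg
  have hderiv : HasDerivAt (fun t : ℝ ↦ t * a + t ^ 2 * b) a 0 := by
    simpa using ((hasDerivAt_id' (0 : ℝ)).mul_const a).fun_add
      (((hasDerivAt_id' (0 : ℝ)).fun_pow 2).mul_const b)
  exact hmin.hasDerivAt_eq_zero hderiv

variable {Y : Type} [TopologicalSpace Y] [CompactSpace Y] [MeasurableSpace Y]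
  [OpensMeasurableSpace Y]

section MarkovOperator

variable {P : Y → ProbabilityMeasure Y} {f g : Y → ℝ}

lemma continuous_iff_forall_continuous_opP1 :
    Continuous P ↔ ∀ f : Y → ℝ, Continuous f → Continuous (opP1 P f) := by
  rw [ProbabilityMeasure.continuous_iff_forall_continuous_integral]
  exact ⟨fun hP f hf ↦ hP (BoundedContinuousFunction.mkOfCompact ⟨f, hf⟩),
    fun hP f ↦ hP f f.continuous⟩

lemma continuous_opP1 (hP : Continuous P) (hf : Continuous f) : Continuous (opP1 P f) :=
  continuous_iff_forall_continuous_opP1.1 hP f hf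

lemma opP1_mono (hf : Continuous f) (hg : Continuous g) (hfg : ∀ x, f x ≤ g x) (u : Y) :
    opP1 P f u ≤ opP1 P g u :=
  integral_mono (integrable_of_continuous _ hf) (integrable_of_continuous _ hg) hfg

lemma exp_opP1_log_le_opP1 (hf : Continuous f) (hpos : ∀ x, 0 < f x) (u : Y) :
    Real.exp (opP1 P (fun x ↦ Real.log (f x)) u) ≤ opP1 P f u := by
  have hlog : Continuous fun x ↦ Real.log (f x) := hf.log fun x ↦ (hpos x).ne'
  have hjensen := convexOn_exp.map_integral_le (μ := (P u : Measure Y))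
    Real.continuous_exp.continuousOn isClosed_univ (Eventually.of_forall fun _ ↦ Set.mem_univ _)
    (integrable_of_continuous _ hlog) (integrable_of_continuous _ (Real.continuous_exp.comp hlog))
  simpa only [opP1, Real.exp_log (hpos _)] using hjensen

lemma opP1_pos (hf : Continuous f) (hpos : ∀ x, 0 < f x) (u : Y) : 0 < opP1 P f u :=
  (Real.exp_pos _).trans_le (exp_opP1_log_le_opP1 hf hpos u)

lemma opP1_log_le_log_opP1 (hf : Continuous f) (hpos : ∀ x, 0 < f x) (u : Y) :
    opP1 P (fun x ↦ Real.log (f x)) u ≤ Real.log (opP1 P f u) :=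
  (Real.le_log_iff_exp_le (opP1_pos hf hpos u)).2 (exp_opP1_log_le_opP1 hf hpos u)

lemma opP1_exp_le (hf : Continuous f) {M t : ℝ} (hM : ∀ x, |f x| ≤ M) (ht : |t| * M ≤ 1)
    (u : Y) :
    opP1 P (fun x ↦ Real.exp (t * f x)) u ≤ 1 + t * opP1 P f u + t ^ 2 * M ^ 2 := by
  have hpointwise (x : Y) : Real.exp (t * f x) ≤ 1 + t * f x + t ^ 2 * M ^ 2 := by
    have hsmall : |t * f x| ≤ 1 :=
      (abs_mul t (f x)).trans_le ((mul_le_mul_of_nonneg_left (hM x) (abs_nonneg t)).trans ht)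
    have hexp := (abs_le.1 (Real.abs_exp_sub_one_sub_id_le hsmall)).2
    have hsq : (t * f x) ^ 2 ≤ t ^ 2 * M ^ 2 := by
      rw [mul_pow]
      exact mul_le_mul_of_nonneg_left (sq_le_sq.2 ((hM x).trans (le_abs_self M))) (sq_nonneg t)
    linarith
  calc opP1 P (fun x ↦ Real.exp (t * f x)) u
      ≤ opP1 P (fun x ↦ 1 + t * f x + t ^ 2 * M ^ 2) u :=
        opP1_mono (by fun_prop) (by fun_prop) hpointwise u
    _ = 1 + t * opP1 P f u + t ^ 2 * M ^ 2 := by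
        simp only [opP1]
        rw [integral_add (integrable_of_continuous _ (by fun_prop)) (integrable_const _),
          integral_add (integrable_const 1) (integrable_of_continuous _ (by fun_prop)),
          integral_const_mul]
        simp

end MarkovOperator

/-- Stationarity of the measure `σ` for the Markov operator of `P`, tested against continuous
functions. -/
def IsStationaryMeasure (P : Y → ProbabilityMeasure Y) (σ : Measure Y) : Prop :=
  ∀ f : Y → ℝ, Continuous f → ∫ u, opP1 P f u ∂σ = ∫ u, f u ∂σ

/-- The quantity `⟨log (𝔓₁ g / g), σ⟩` minimized over `g ∈ C₊(Y)` in the Donsker–Varadhan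
functional. -/
def dvIntegral (P : Y → ProbabilityMeasure Y) (σ : Measure Y) (g : Y → ℝ) : ℝ :=
  ∫ x, Real.log (opP1 P g x / g x) ∂σ

section DVIntegral

variable {P : Y → ProbabilityMeasure Y} {f g : Y → ℝ}

lemma continuous_log_opP1_div (hP : Continuous P) (hg : Continuous g) (hpos : ∀ x, 0 < g x) :
    Continuous fun x ↦ Real.log (opP1 P g x / g x) :=
  ((continuous_opP1 hP hg).div hg fun x ↦ (hpos x).ne').log
    fun x ↦ (div_pos (opP1_pos hg hpos x) (hpos x)).ne'

variable {σ : Measure Y} [IsFiniteMeasure σ]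

lemma integral_opP1_sub (hP : Continuous P) (hf : Continuous f) :
    ∫ u, (opP1 P f u - f u) ∂σ = ∫ u, opP1 P f u ∂σ - ∫ u, f u ∂σ :=
  integral_sub (integrable_of_continuous _ (continuous_opP1 hP hf)) (integrable_of_continuous _ hf)

lemma IsStationaryMeasure.dvIntegral_nonneg (hσ : IsStationaryMeasure P σ) (hP : Continuous P)
    (hf : Continuous f) (hpos : ∀ x, 0 < f x) : 0 ≤ dvIntegral P σ f := by
  have hlog : Continuous fun x ↦ Real.log (f x) := hf.log fun x ↦ (hpos x).ne'
  calc (0 : ℝ)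
      = ∫ u, (opP1 P (fun x ↦ Real.log (f x)) u - Real.log (f u)) ∂σ := by
        rw [integral_opP1_sub hP hlog, hσ _ hlog, sub_self]
    _ ≤ dvIntegral P σ f := by
        refine integral_mono
          (integrable_of_continuous _ ((continuous_opP1 hP hlog).sub hlog))
          (integrable_of_continuous _ (continuous_log_opP1_div hP hf hpos)) fun u ↦ ?_
        dsimp only
        rw [Real.log_div (opP1_pos hf hpos u).ne' (hpos u).ne']
        exact sub_le_sub_right (opP1_log_le_log_opP1 hf hpos u) _

lemma dvIntegral_exp_le (hP : Continuous P) (hf : Continuous f) {M t : ℝ}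
    (hM : ∀ x, |f x| ≤ M) (ht : |t| * M ≤ 1) :
    dvIntegral P σ (fun x ↦ Real.exp (t * f x)) ≤
      t * (∫ u, opP1 P f u ∂σ - ∫ u, f u ∂σ) + t ^ 2 * (M ^ 2 * σ.real Set.univ) := by
  have hexp : Continuous fun x ↦ Real.exp (t * f x) := by fun_prop
  have hsub : Continuous fun u ↦ t * (opP1 P f u - f u) :=
    ((continuous_opP1 hP hf).sub hf).const_mul t
  calc dvIntegral P σ (fun x ↦ Real.exp (t * f x))
      ≤ ∫ u, (t * (opP1 P f u - f u) + t ^ 2 * M ^ 2) ∂σ := by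
        refine integral_mono
          (integrable_of_continuous _ (continuous_log_opP1_div hP hexp fun _ ↦ Real.exp_pos _))
          (integrable_of_continuous _ (hsub.add continuous_const)) fun u ↦ ?_
        have hpos : 0 < opP1 P (fun x ↦ Real.exp (t * f x)) u :=
          opP1_pos hexp (fun _ ↦ Real.exp_pos _) u
        have hlog := Real.log_le_sub_one_of_pos hpos
        have hquad := opP1_exp_le (P := P) hf hM ht u
        dsimp only
        rw [Real.log_div hpos.ne' (Real.exp_pos _).ne', Real.log_exp]
        linarith
    _ = t * (∫ u, opP1 P f u ∂σ - ∫ u, f u ∂σ) + t ^ 2 * (M ^ 2 * σ.real Set.univ) := by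
        rw [integral_add (integrable_of_continuous _ hsub) (integrable_const _),
          integral_const_mul, integral_opP1_sub hP hf, integral_const, smul_eq_mul]
        ring

lemma isStationaryMeasure_of_forall_dvIntegral_nonneg (hP : Continuous P)
    (hnonneg : ∀ f : Y → ℝ, Continuous f → (∀ x, 0 < f x) → 0 ≤ dvIntegral P σ f) :
    IsStationaryMeasure P σ := by
  intro f hf
  obtain ⟨M, hM⟩ := isCompact_univ.exists_bound_of_continuousOn hf.continuousOn
  have hsmall : ∀ᶠ t in 𝓝 (0 : ℝ), |t| * M ≤ 1 :=
    (continuous_abs.mul_const M).tendsto' 0 0 (by simp) |>.eventually_le_const one_pos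
  refine sub_eq_zero.1 (eq_zero_of_eventually_nonneg_linear_add_sq
    (b := M ^ 2 * σ.real Set.univ) ?_)
  filter_upwards [hsmall] with t ht
  exact (hnonneg _ (by fun_prop) fun _ ↦ Real.exp_pos _).trans
    (dvIntegral_exp_le hP hf (fun x ↦ hM x (Set.mem_univ x)) ht)

lemma forall_dvIntegral_nonneg_iff_isStationaryMeasure (hP : Continuous P) :
    (∀ f : Y → ℝ, Continuous f → (∀ x, 0 < f x) → 0 ≤ dvIntegral P σ f) ↔ IsStationaryMeasure P σ :=
  ⟨isStationaryMeasure_of_forall_dvIntegral_nonneg hP, fun hσ _ ↦ hσ.dvIntegral_nonneg hP⟩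

end DVIntegral

/-- The Doob transform of the transition function `P` by `g ∈ C₊(Y)`: the measure `P u` is
reweighted by the density `g / 𝔓₁ g (u)`, written as the exponential tilting by `log g`. -/
def doobTransform (P : Y → ProbabilityMeasure Y) {g : Y → ℝ} (hg : Continuous g)
    (hpos : ∀ x, 0 < g x) (u : Y) : ProbabilityMeasure Y :=
  ⟨(P u : Measure Y).tilted fun x ↦ Real.log (g x),
    isProbabilityMeasure_tilted (by
      simpa only [Real.exp_log (hpos _)] using integrable_of_continuous _ hg)⟩

section DoobTransform

variable {P : Y → ProbabilityMeasure Y} {f g : Y → ℝ} (hg : Continuous g) (hpos : ∀ x, 0 < g x)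

lemma opP1_doobTransform (f : Y → ℝ) (u : Y) :
    opP1 (doobTransform P hg hpos) f u = opP1 P (fun x ↦ f x * g x) u / opP1 P g u := by
  simp only [opP1, doobTransform, ProbabilityMeasure.coe_mk, integral_tilted,
    Real.exp_log (hpos _), smul_eq_mul]
  rw [← integral_div]
  congr with x
  ring

lemma continuous_doobTransform (hP : Continuous P) : Continuous (doobTransform P hg hpos) := by
  refine continuous_iff_forall_continuous_opP1.2 fun f hf ↦ ?_
  simp only [funext (opP1_doobTransform hg hpos f)]
  exact (continuous_opP1 hP (hf.mul hg)).div (continuous_opP1 hP hg)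
    fun u ↦ (opP1_pos hg hpos u).ne'

lemma dvIntegral_mul {σ : Measure Y} [IsFiniteMeasure σ] (hP : Continuous P)
    (hf : Continuous f) (hfpos : ∀ x, 0 < f x) :
    dvIntegral P σ (fun x ↦ f x * g x) =
      dvIntegral P σ g + dvIntegral (doobTransform P hg hpos) σ f := by
  have hQ := continuous_doobTransform hg hpos hP
  simp only [dvIntegral]
  rw [← integral_add (integrable_of_continuous _ (continuous_log_opP1_div hP hg hpos))
    (integrable_of_continuous _ (continuous_log_opP1_div hQ hf hfpos))]
  congr with x
  have hPg : 0 < opP1 P g x := opP1_pos hg hpos x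
  have hQf : 0 < opP1 (doobTransform P hg hpos) f x := opP1_pos hf hfpos x
  have hgx := hpos x
  have hfx := hfpos x
  rw [← Real.log_mul (by positivity) (by positivity), opP1_doobTransform]
  congr 1
  field_simp

lemma forall_dvIntegral_le_iff {σ : Measure Y} [IsFiniteMeasure σ] (hP : Continuous P) :
    (∀ f : Y → ℝ, Continuous f → (∀ x, 0 < f x) → dvIntegral P σ g ≤ dvIntegral P σ f) ↔
      ∀ f : Y → ℝ, Continuous f → (∀ x, 0 < f x) →
        0 ≤ dvIntegral (doobTransform P hg hpos) σ f := by
  constructor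
  · intro hmin f hf hfpos
    have hle := hmin (fun x ↦ f x * g x) (hf.mul hg) fun x ↦ mul_pos (hfpos x) (hpos x)
    rwa [dvIntegral_mul hg hpos hP hf hfpos, le_add_iff_nonneg_right] at hle
  · intro hnonneg f hf hfpos
    have hquot : Continuous fun x ↦ f x / g x := hf.div hg fun x ↦ (hpos x).ne'
    have hquot_pos (x : Y) : 0 < f x / g x := div_pos (hfpos x) (hpos x)
    have hmul := dvIntegral_mul (σ := σ) hg hpos hP hquot hquot_pos
    simp only [div_mul_cancel₀ _ (hpos _).ne'] at hmul
    exact hmul ▸ le_add_of_nonneg_right (hnonneg _ hquot hquot_pos)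

lemma opP1_doobTransform_of_opP1_eq_mul {V h : Y → ℝ} {lam : ℝ}
    (hg : Continuous fun x ↦ h x * Real.exp (V x)) (hpos : ∀ x, 0 < h x * Real.exp (V x))
    (heig : ∀ u, opP1 P (fun x ↦ h x * Real.exp (V x)) u = lam * h u) (f : Y → ℝ) (u : Y) :
    opP1 (doobTransform P hg hpos) f u =
      lam⁻¹ * (h u)⁻¹ * opP1 P (fun x ↦ f x * h x * Real.exp (V x)) u := by
  simp only [opP1_doobTransform, heig, mul_assoc]
  rw [div_eq_inv_mul, mul_inv, mul_assoc]

end DoobTransform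

lemma DVfunctional_eq_neg_dvIntegral_iff {X : Type} [MetricSpace X] [MeasurableSpace X]
    {P : X → ProbabilityMeasure X} {σ : ProbabilityMeasure X} {g : X → ℝ}
    (hg : Continuous g) (hpos : ∀ x, 0 < g x) :
    DVfunctional P σ = -(dvIntegral P σ g : EReal) ↔
      ∀ f : X → ℝ, Continuous f → (∀ x, 0 < f x) → dvIntegral P σ g ≤ dvIntegral P σ f := by
  rw [DVfunctional, neg_inj]
  constructor
  · intro hinf f hf hfpos
    exact EReal.coe_le_coe_iff.1 <| hinf.symm.trans_le <|
      iInf_le_of_le ⟨f, hf, hfpos⟩ le_rfl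
  · intro hmin
    exact le_antisymm (iInf_le_of_le ⟨g, hg, hpos⟩ le_rfl)
      (le_iInf fun f ↦ EReal.coe_le_coe_iff.2 (hmin f.1 f.2.1 f.2.2))

theorem statement13_general {P : X → ProbabilityMeasure X} (hP : Continuous P) {g : X → ℝ}
    (hg : Continuous g) (hpos : ∀ x, 0 < g x) (σ : ProbabilityMeasure X) :
    DVfunctional P σ = -((∫ x, Real.log (opP1 P g x / g x) ∂(σ : Measure X) : ℝ) : EReal) ↔
      IsStationaryMeasure (doobTransform P hg hpos) σ :=
  (DVfunctional_eq_neg_dvIntegral_iff hg hpos).trans <|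
    (forall_dvIntegral_le_iff hg hpos hP).trans <|
      forall_dvIntegral_nonneg_iff_isStationaryMeasure (continuous_doobTransform hg hpos hP)

/-- **Lemma 4.3**: for a Feller Markov transition function `P` on a compact metric space, if
`𝔓₁(h e^V) = λ h` with `λ > 0`, `h ∈ C₊(X)`, and `ν = hμ` is the unique stationary measure of
the Markov semigroup `𝒮₁^V g = λ⁻¹ h⁻¹ 𝔓₁(g h e^V)`, then the infimum defining `J(σ)` is
attained at `g = h̃ = h e^V` if and only if `σ = ν`. -/
theorem statement13 (P : X → ProbabilityMeasure X) (hFeller : Continuous P)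
    (V : X → ℝ) (hV : Continuous V)
    (lam : ℝ) (hlam : 0 < lam)
    (h : X → ℝ) (hcont : Continuous h) (hpos : ∀ x, 0 < h x)
    (heig : ∀ u, opP1 P (fun x => h x * Real.exp (V x)) u = lam * h u)
    (μ : Measure X) [IsFiniteMeasure μ]
    (hnorm : (∫ x, h x ∂μ) = 1)
    (hprob : IsProbabilityMeasure (μ.withDensity fun x => ENNReal.ofReal (h x)))
    (hstat : ∀ g : X → ℝ, Continuous g →
      (∫ u, lam⁻¹ * (h u)⁻¹ * opP1 P (fun x => g x * h x * Real.exp (V x)) u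
          ∂(μ.withDensity fun x => ENNReal.ofReal (h x)))
        = ∫ u, g u ∂(μ.withDensity fun x => ENNReal.ofReal (h x)))
    (huniq : ∀ ν' : ProbabilityMeasure X,
      (∀ g : X → ℝ, Continuous g →
        (∫ u, lam⁻¹ * (h u)⁻¹ * opP1 P (fun x => g x * h x * Real.exp (V x)) u
            ∂(ν' : Measure X))
          = ∫ u, g u ∂(ν' : Measure X)) →
      (ν' : Measure X) = μ.withDensity fun x => ENNReal.ofReal (h x)) :
    ∀ σ : ProbabilityMeasure X,
      (DVfunctional P σ
          = -((∫ x, Real.log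
                (opP1 P (fun y => h y * Real.exp (V y)) x / (h x * Real.exp (V x)))
                ∂(σ : Measure X) : ℝ) : EReal))
        ↔ (σ : Measure X) = μ.withDensity fun x => ENNReal.ofReal (h x) := by
  have hg : Continuous fun x ↦ h x * Real.exp (V x) := by fun_prop
  have hgpos (x : X) : 0 < h x * Real.exp (V x) := mul_pos (hpos x) (Real.exp_pos _)
  simp only [← opP1_doobTransform_of_opP1_eq_mul hg hgpos heig] at hstat huniq
  exact fun σ ↦ (statement13_general hFeller hg hgpos σ).trans
    ⟨huniq σ, fun hσ ↦ hσ.symm ▸ hstat⟩
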